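/- Let M ∈ 𝔻ℍ[t] be a bounded monic reduced motion polynomial and let M = M₁·M₂⋯M_r be a factorization into monic motion polynomials such that ν(Mᵢ) = Nᵢ^{nᵢ} for pairwise coprime real irreducible quadratic polynomials N₁, …, N_r ∈ ℝ[t] and positive integers n₁, …, n_r. If M admits a factorization into monic linear motion polynomial factors, then each Mᵢ (i = 1, …, r) admits a factorization into monic linear motion polynomial factors. -/

import Mathlib

open Polynomial DualNumber TrivSqZeroExt

noncomputable section

/-- The real quaternions. -/
abbrev Hq : Type := Quaternion ℝ

/-- The dual quaternions. -/
abbrev DHq : Type := DualNumber Hq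

/-- Conjugation of a dual quaternion: `(p + ε d)* = p* + ε d*`. -/
instance : Star DHq := ⟨fun x => inl (star x.fst) + inr (star x.snd)⟩

/-- Coefficient-wise (quaternion) conjugation of a polynomial. -/
def cstar {R : Type*} [Semiring R] [Star R] (A : R[X]) : R[X] :=
  A.sum fun n a => Polynomial.C (star a) * Polynomial.X ^ n

/-- The embedding `ℝ[t] → ℍ[t]`. -/
def qPoly (f : ℝ[X]) : Hq[X] := f.map (algebraMap ℝ Hq)

/-- The embedding `ℍ[t] → 𝔻ℍ[t]` (primal part). -/
def dhQ (P : Hq[X]) : DHq[X] := P.map (inlHom Hq Hq)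

/-- The embedding `ℝ[t] → 𝔻ℍ[t]`. -/
def dPoly (f : ℝ[X]) : DHq[X] := dhQ (qPoly f)

/-- The dual quaternion polynomial `P + ε D` with primal part `P` and dual part `D`. -/
def mp (P D : Hq[X]) : DHq[X] := dhQ P + Polynomial.C ε * dhQ D

/-- The primal part of a dual quaternion polynomial. -/
def primal (A : DHq[X]) : Hq[X] := A.map (fstHom ℝ Hq Hq).toRingHom

/-- A motion polynomial: a dual quaternion polynomial whose norm polynomial
`ν(M) = M·M*` is a nonzero real polynomial. -/
def IsMotion (M : DHq[X]) : Prop := ∃ f : ℝ[X], f ≠ 0 ∧ M * cstar M = dPoly f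

/-- A real polynomial divides a quaternion polynomial. -/
def RDvdQ (f : ℝ[X]) (A : Hq[X]) : Prop := ∃ B : Hq[X], A = qPoly f * B

/-- A real polynomial divides a dual quaternion polynomial. -/
def RDvdD (f : ℝ[X]) (A : DHq[X]) : Prop := ∃ B : DHq[X], A = dPoly f * B

/-- `g` is the greatest common monic real polynomial divisor of a quaternion polynomial `A`
(with itself), i.e. `g = mrpf A`. -/
def IsMrpfQ (g : ℝ[X]) (A : Hq[X]) : Prop :=
  g.Monic ∧ RDvdQ g A ∧ ∀ f : ℝ[X], f.Monic → RDvdQ f A → f ∣ g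

/-- `g` is the greatest common monic real polynomial divisor of `c ∈ ℝ[t]` and a quaternion
polynomial `A`, i.e. `g = mrpf(c, A)`. -/
def IsMrpf2 (g : ℝ[X]) (c : ℝ[X]) (A : Hq[X]) : Prop :=
  g.Monic ∧ g ∣ c ∧ RDvdQ g A ∧
    ∀ f : ℝ[X], f.Monic → f ∣ c → RDvdQ f A → f ∣ g

/-- `g` is the greatest common monic real polynomial divisor of `c ∈ ℝ[t]` and two quaternion
polynomials `A` and `B`, i.e. `g = mrpf(c, A, B)`. -/
def IsMrpf3 (g : ℝ[X]) (c : ℝ[X]) (A B : Hq[X]) : Prop :=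
  g.Monic ∧ g ∣ c ∧ RDvdQ g A ∧ RDvdQ g B ∧
    ∀ f : ℝ[X], f.Monic → f ∣ c → RDvdQ f A → RDvdQ f B → f ∣ g

/-- A quaternion polynomial is reduced: `mrpf = 1`, i.e. it has only constant real
polynomial factors. -/
def ReducedQ (A : Hq[X]) : Prop := ∀ f : ℝ[X], f.Monic → RDvdQ f A → f = 1

/-- A dual quaternion polynomial is reduced: `mrpf = 1`. -/
def ReducedD (A : DHq[X]) : Prop := ∀ f : ℝ[X], f.Monic → RDvdD f A → f = 1

/-- Boundedness of a (monic reduced) motion polynomial: `mrpf` of its primal part has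
no real root, equivalently no linear real polynomial `t - a` divides the primal part. -/
def BoundedD (M : DHq[X]) : Prop :=
  ∀ a : ℝ, ¬ RDvdQ (Polynomial.X - Polynomial.C a) (primal M)

/-- A generic motion polynomial: monic, a motion polynomial, with `mrpf` of the primal
part equal to `1`. -/
def GenericD (M : DHq[X]) : Prop :=
  M.Monic ∧ IsMotion M ∧ ReducedQ (primal M)

/-- The monic linear dual quaternion polynomial `t - p - ε d`. -/
def lin (p d : Hq) : DHq[X] := mp (Polynomial.X - Polynomial.C p) (-Polynomial.C d)

/-- `M` admits a factorization into monic linear motion polynomial factors. -/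
def HasLinFact (M : DHq[X]) : Prop :=
  ∃ L : List DHq, (∀ h ∈ L, IsMotion (Polynomial.X - Polynomial.C h)) ∧
    M = (L.map fun h => Polynomial.X - Polynomial.C h).prod

end

/-!
Two facts drive the proof.

* A factorization `A * B` into monic polynomials with prescribed coprime norm polynomials `a`
  and `b` is unique: if `A * B = A' * B'`, then `A` divides both `A' * a` and `A' * b` from the
  left.
* Two monic linear factors with coprime norm polynomials can be interchanged at the expense of
  replacing them by other ones: `(t - h₁) * (t - h₂) = (t - h₂') * (t - h₁')`, where each new
  factor has the norm polynomial of the old one with the same index.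

The norm polynomial of `t - h` is a power of an irreducible real polynomial, hence divides one of
the coprime polynomials `a`, `b` as soon as it divides `a * b`. Given a product of linear factors
with norm polynomial `a * b`, interchanging moves the factors with norm polynomial dividing `a` to
the left. By uniqueness the two blocks obtained are the given factors with norm polynomials `a`
and `b`.
-/

section Conjugation

variable {R : Type*}

section Semiring

variable [Semiring R] [StarRing R]

theorem coeff_cstar (A : R[X]) (n : ℕ) : (cstar A).coeff n = star (A.coeff n) := by
  rw [cstar, Polynomial.sum_def, finsetSum_coeff]
  simp only [coeff_C_mul_X_pow]
  rw [Finset.sum_ite_eq, ite_eq_left_iff, notMem_support_iff]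
  intro hn
  rw [hn, star_zero]

theorem cstar_one : cstar (1 : R[X]) = 1 := by
  ext n
  rw [coeff_cstar, coeff_one]
  split_ifs <;> simp

theorem cstar_C (x : R) : cstar (C x) = C (star x) := by
  ext n
  rw [coeff_cstar, coeff_C, coeff_C]
  split_ifs <;> simp

theorem cstar_mul (A B : R[X]) : cstar (A * B) = cstar B * cstar A := by
  ext n
  rw [coeff_cstar, coeff_mul, coeff_mul, star_sum, ← Finset.Nat.sum_antidiagonal_swap]
  simp only [star_mul, coeff_cstar, Prod.fst_swap, Prod.snd_swap]

theorem monic_cstar {A : R[X]} (hA : A.Monic) : (cstar A).Monic := by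
  refine monic_of_natDegree_le_of_coeff_eq_one A.natDegree ?_ ?_
  · refine natDegree_le_iff_coeff_eq_zero.mpr fun n hn => ?_
    rw [coeff_cstar, coeff_eq_zero_of_natDegree_lt hn, star_zero]
  · rw [coeff_cstar, hA.coeff_natDegree, star_one]

theorem map_cstar {S : Type*} [Semiring S] [StarRing S] (φ : R →+* S)
    (hφ : ∀ x, φ (star x) = star (φ x)) (A : R[X]) : (cstar A).map φ = cstar (A.map φ) := by
  ext n
  rw [coeff_map, coeff_cstar, coeff_cstar, coeff_map, hφ]

theorem cstar_conj_unit (u : Rˣ) (hu : ∀ x : R, Commute (star (u : R) * u) x) (A : R[X]) :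
    cstar (C (u : R) * A * C ((u⁻¹ : Rˣ) : R)) = C (u : R) * cstar A * C ((u⁻¹ : Rˣ) : R) := by
  have hu_inv : C (u : R) * C ((u⁻¹ : Rˣ) : R) = 1 := by rw [← C_mul, u.mul_inv, C_1]
  have hstar : C (star ((u⁻¹ : Rˣ) : R)) * C (star (u : R)) = 1 := by
    rw [← C_mul, ← star_mul, u.mul_inv, star_one, C_1]
  have hcentral : C (star (u : R)) * C (u : R) * cstar A =
      cstar A * (C (star (u : R)) * C (u : R)) := by
    ext n
    rw [← C_mul, coeff_C_mul, coeff_mul_C, (hu _).eq]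
  calc cstar (C (u : R) * A * C ((u⁻¹ : Rˣ) : R))
      = C (star ((u⁻¹ : Rˣ) : R)) * (cstar A * (C (star (u : R)) * C (u : R))) *
          C ((u⁻¹ : Rˣ) : R) := by
        simp only [cstar_mul, cstar_C, mul_assoc, hu_inv, mul_one]
    _ = C (star ((u⁻¹ : Rˣ) : R)) * C (star (u : R)) * C (u : R) * cstar A *
          C ((u⁻¹ : Rˣ) : R) := by
        rw [← hcentral]
        simp only [mul_assoc]
    _ = C (u : R) * cstar A * C ((u⁻¹ : Rˣ) : R) := by rw [hstar, one_mul]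

end Semiring

theorem cstar_X_sub_C [Ring R] [StarRing R] (x : R) : cstar (X - C x) = X - C (star x) := by
  ext n
  rw [coeff_cstar, coeff_sub, coeff_sub, star_sub, ← coeff_cstar (C x), cstar_C, coeff_X]
  split_ifs <;> simp

end Conjugation

theorem commute_map_algebraMap {k R : Type*} [CommSemiring k] [Semiring R] [Algebra k R]
    (a : k[X]) (A : R[X]) : Commute (a.map (algebraMap k R)) A :=
  letI := Polynomial.algebra k R
  Algebra.commutes a A

theorem monic_prod_ofFn {R : Type*} [Semiring R] {r : ℕ} {As : Fin r → R[X]}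
    (hAs : ∀ i, (As i).Monic) : (List.ofFn As).prod.Monic := by
  refine List.prod_induction Polynomial.Monic (fun _ _ hA hB => hA.mul hB) monic_one ?_
  exact List.forall_mem_ofFn_iff.mpr hAs

/-- `A` has norm polynomial `a`, that is `ν(A) = a`. Here `R` is any algebra over `k` with a star
operation, and `a` is an element of `k[X]`, where divisibility and coprimality are the commutative
notions; `a = 0` is allowed. -/
def HasNormPoly {k R : Type*} [CommSemiring k] [Semiring R] [Star R] [Algebra k R]
    (A : R[X]) (a : k[X]) : Prop :=
  A * cstar A = a.map (algebraMap k R)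

namespace HasNormPoly

section Semiring

variable {k R : Type*} [CommSemiring k] [Semiring R] [StarRing R] [Algebra k R]
  {A B : R[X]} {a b : k[X]}

theorem one : HasNormPoly (1 : R[X]) (1 : k[X]) := by
  rw [HasNormPoly, cstar_one, one_mul, Polynomial.map_one]

theorem mul (hA : HasNormPoly A a) (hB : HasNormPoly B b) : HasNormPoly (A * B) (a * b) := by
  calc A * B * cstar (A * B) = A * (B * cstar B) * cstar A := by simp only [cstar_mul, mul_assoc]
    _ = (A * cstar A) * b.map (algebraMap k R) := by
      rw [hB, mul_assoc, (commute_map_algebraMap b _).eq, ← mul_assoc]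
    _ = (a * b).map (algebraMap k R) := by rw [hA, Polynomial.map_mul]

theorem map {S : Type*} [Semiring S] [StarRing S] [Algebra k S] (φ : R →ₐ[k] S)
    (hφ : ∀ x, φ (star x) = star (φ x)) (hA : HasNormPoly A a) :
    HasNormPoly (A.map (φ : R →+* S)) a := by
  rw [HasNormPoly, ← map_cstar (φ : R →+* S) hφ, ← Polynomial.map_mul, hA, Polynomial.map_map,
    φ.comp_algebraMap]

theorem prod_ofFn {r : ℕ} {As : Fin r → R[X]} {as : Fin r → k[X]}
    (hAs : ∀ i, HasNormPoly (As i) (as i)) : HasNormPoly (List.ofFn As).prod (∏ i, as i) := by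
  induction r with
  | zero => simpa using one
  | succ r ih =>
    rw [List.ofFn_succ, List.prod_cons, Fin.prod_univ_succ]
    exact (hAs 0).mul (ih fun i => hAs i.succ)

theorem poly_unique [FaithfulSMul k R] (ha : HasNormPoly A a) (hb : HasNormPoly A b) : a = b :=
  map_injective _ (FaithfulSMul.algebraMap_injective k R) (ha.symm.trans hb)

theorem monic [FaithfulSMul k R] (hA : HasNormPoly A a) (hmonic : A.Monic) : a.Monic := by
  refine monic_of_injective (FaithfulSMul.algebraMap_injective k R) ?_
  rw [← hA]
  exact hmonic.mul (monic_cstar hmonic)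

theorem dvd_of_mul_eq_mul {A' B' : R[X]} (hA : HasNormPoly A a) (hB' : HasNormPoly B' b)
    (hab : IsCoprime a b) (h : A * B = A' * B') : A ∣ A' := by
  obtain ⟨u, v, huv⟩ := hab
  have hdvd_a : A ∣ A' * a.map (algebraMap k R) :=
    ⟨cstar A * A', by rw [← (commute_map_algebraMap a A').eq, ← hA, mul_assoc]⟩
  have hdvd_b : A ∣ A' * b.map (algebraMap k R) :=
    ⟨B * cstar B', by rw [← hB', ← mul_assoc, ← h, mul_assoc]⟩
  have hA' : A' = A' * a.map (algebraMap k R) * u.map (algebraMap k R) +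
      A' * b.map (algebraMap k R) * v.map (algebraMap k R) := by
    rw [mul_assoc, mul_assoc, ← mul_add, ← Polynomial.map_mul, ← Polynomial.map_mul,
      ← Polynomial.map_add, mul_comm a, mul_comm b, huv, Polynomial.map_one, mul_one]
  rw [hA']
  exact dvd_add (hdvd_a.mul_right _) (hdvd_b.mul_right _)

theorem conj_unit (u : Rˣ) (hu : ∀ x : R, Commute (star (u : R) * u) x)
    (hA : HasNormPoly A a) : HasNormPoly (C (u : R) * A * C ((u⁻¹ : Rˣ) : R)) a := by
  have hu_inv : C (u : R) * C ((u⁻¹ : Rˣ) : R) = 1 := by rw [← C_mul, u.mul_inv, C_1]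
  have hinv_u : C ((u⁻¹ : Rˣ) : R) * C (u : R) = 1 := by rw [← C_mul, u.inv_mul, C_1]
  calc C (u : R) * A * C ((u⁻¹ : Rˣ) : R) * cstar (C (u : R) * A * C ((u⁻¹ : Rˣ) : R))
      = C (u : R) * A * (C ((u⁻¹ : Rˣ) : R) * C (u : R)) * cstar A * C ((u⁻¹ : Rˣ) : R) := by
        rw [cstar_conj_unit u hu]
        simp only [mul_assoc]
    _ = C (u : R) * (A * cstar A) * C ((u⁻¹ : Rˣ) : R) := by
        rw [hinv_u, mul_one, mul_assoc (C (u : R))]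
    _ = a.map (algebraMap k R) := by
        rw [hA, ← (commute_map_algebraMap a _).eq, mul_assoc, hu_inv, mul_one]

end Semiring

section Ring

variable {k R : Type*} [CommSemiring k] [Ring R] [StarRing R] [Algebra k R]
  {A B : R[X]} {a b : k[X]} {h : R}

theorem cstar_mul_self (hA : HasNormPoly A a) (hmonic : A.Monic) :
    cstar A * A = a.map (algebraMap k R) := by
  refine hmonic.isRegular.left ?_
  calc A * (cstar A * A) = a.map (algebraMap k R) * A := by rw [← mul_assoc, hA]
    _ = A * a.map (algebraMap k R) := (commute_map_algebraMap a A).eq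

theorem right_of_mul (hAB : HasNormPoly (A * B) (a * b)) (hA : HasNormPoly A a) (hmonic : A.Monic) :
    HasNormPoly B b := by
  refine hmonic.isRegular.left ((monic_cstar hmonic).isRegular.right ?_)
  calc A * (B * cstar B) * cstar A = (a * b).map (algebraMap k R) := by
        rw [← hAB, cstar_mul]
        simp only [mul_assoc]
    _ = A * cstar A * b.map (algebraMap k R) := by rw [hA, Polynomial.map_mul]
    _ = A * b.map (algebraMap k R) * cstar A := by
        rw [mul_assoc, ← (commute_map_algebraMap b _).eq, mul_assoc]

theorem aeval_star_eq_zero (hh : HasNormPoly (X - C h) a) : aeval (star h) a = 0 := by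
  rw [← eval_map_algebraMap, ← hh, cstar_X_sub_C, eval_mul_X_sub_C]

theorem aeval_eq_zero (hh : HasNormPoly (X - C h) a) : aeval h a = 0 := by
  rw [← eval_map_algebraMap, ← hh.cstar_mul_self (monic_X_sub_C h), eval_mul_X_sub_C]

theorem eq_and_eq_of_mul_eq_mul {A' B' : R[X]} (hA : HasNormPoly A a) (hB : HasNormPoly B b)
    (hA' : HasNormPoly A' a) (hB' : HasNormPoly B' b) (hab : IsCoprime a b)
    (hmonic : A.Monic) (hmonic' : A'.Monic) (h : A * B = A' * B') : A = A' ∧ B = B' := by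
  obtain ⟨Q, hQ⟩ := hA.dvd_of_mul_eq_mul hB' hab h
  obtain ⟨Q', hQ'⟩ := hA'.dvd_of_mul_eq_mul hB hab h.symm
  have hQ_monic : Q.Monic := hmonic.of_mul_monic_left (hQ ▸ hmonic')
  have hQQ' : Q * Q' = 1 := by
    refine hmonic.isRegular.left ?_
    simp only [← mul_assoc, ← hQ, ← hQ', mul_one]
  have hQ_one : Q = 1 := by
    have hdeg := congrArg natDegree hQQ'
    rw [hQ_monic.natDegree_mul (hQ_monic.of_mul_monic_left (hQQ' ▸ monic_one)),
      natDegree_one] at hdeg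
    exact hQ_monic.natDegree_eq_zero.mp (by omega)
  obtain rfl : A = A' := by rw [hQ, hQ_one, mul_one]
  exact ⟨rfl, hmonic.isRegular.left h⟩

theorem exists_swap_of_isUnit {h₁ h₂ : R} (hA : HasNormPoly (X - C h₁) a)
    (hB : HasNormPoly (X - C h₂) b) (hunit : IsUnit (star h₂ - h₁))
    (hcentral : ∀ x : R, Commute (star (star h₂ - h₁) * (star h₂ - h₁)) x) :
    ∃ h₁' h₂' : R, HasNormPoly (X - C h₁') a ∧ HasNormPoly (X - C h₂') b ∧
      (X - C h₁) * (X - C h₂) = (X - C h₂') * (X - C h₁') := by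
  obtain ⟨u, hu⟩ := hunit
  rw [← hu] at hcentral
  -- Subtracting the norm of `X - C h₂` from the product leaves `C u * (X - C h₂)`, so the new left
  -- factor is the conjugate of `X - C h₂` by `u`.
  have hconj : C (u : R) * (X - C h₂) * C ((u⁻¹ : Rˣ) : R) = X - C (u * h₂ * (u⁻¹ : Rˣ)) := by
    rw [mul_sub, sub_mul, ← X_mul_C, mul_assoc, ← C_mul, u.mul_inv, C_1, mul_one]
    simp only [C_mul]
  set h₂' : R := u * h₂ * (u⁻¹ : Rˣ)
  have hB' : HasNormPoly (X - C h₂') b := hconj ▸ hB.conj_unit u hcentral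
  have hmove : C (u : R) * (X - C h₂) = (X - C h₂') * C (u : R) := by
    rw [← hconj, mul_assoc _ _ (C (u : R)), ← C_mul, u.inv_mul, C_1, mul_one]
  have hswap : (X - C h₁) * (X - C h₂) = (X - C h₂') * (X - C (star h₂' - u)) := by
    calc (X - C h₁) * (X - C h₂) = (X - C (star h₂)) * (X - C h₂) + C (u : R) * (X - C h₂) := by
          rw [← add_mul, hu, C_sub]
          congr 1
          abel
      _ = (X - C h₂') * (X - C (star h₂')) + (X - C h₂') * C (u : R) := by
          rw [hmove, ← cstar_X_sub_C, ← cstar_X_sub_C, hB', hB.cstar_mul_self (monic_X_sub_C h₂)]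
      _ = (X - C h₂') * (X - C (star h₂' - u)) := by
          rw [← mul_add, C_sub]
          congr 1
          abel
  refine ⟨star h₂' - u, h₂', right_of_mul ?_ hB' (monic_X_sub_C h₂'), hB', hswap⟩
  rw [← hswap, mul_comm b]
  exact hA.mul hB

end Ring

end HasNormPoly

theorem isUnit_sub_of_aeval_eq_zero {k R D : Type*} [CommSemiring k] [Ring R] [DivisionRing D]
    [Algebra k R] [Algebra k D] (φ : R →ₐ[k] D) [IsLocalHom φ] {x y : R} {f g : k[X]}
    (hfg : IsCoprime f g) (hx : aeval x f = 0) (hy : aeval y g = 0) : IsUnit (x - y) := by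
  refine isUnit_of_map_unit φ _ (isUnit_iff_ne_zero.mpr ?_)
  rw [map_sub, sub_ne_zero]
  intro hxy
  obtain ⟨u, v, huv⟩ := hfg
  have hf : aeval (φ x) f = 0 := by rw [aeval_algHom_apply, hx, map_zero]
  have hg : aeval (φ x) g = 0 := by rw [hxy, aeval_algHom_apply, hy, map_zero]
  simpa [hf, hg] using congrArg (aeval (φ x)) huv

theorem dvd_or_dvd_of_isPrimePow_of_isCoprime {R : Type*} [CommRing R] [IsDomain R] {q a b : R}
    (hq : IsPrimePow q) (hab : IsCoprime a b) (h : q ∣ a * b) : q ∣ a ∨ q ∣ b := by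
  obtain ⟨p, n, hp, -, rfl⟩ := hq
  by_cases hpa : p ∣ a
  · have hpb : ¬ p ∣ b := fun hpb => hp.not_isUnit (hab.isUnit_of_dvd' hpa hpb)
    exact Or.inl (hp.pow_dvd_of_dvd_mul_right n hpb h)
  · exact Or.inr (hp.pow_dvd_of_dvd_mul_left n hpa h)

/-- `P` is a product of monic linear polynomials which have norm polynomials, and `a` is the
product of these norm polynomials. Recording `a` lets one induct on the factors while splitting
`a` into coprime parts. -/
inductive IsLinProd {k R : Type*} [CommSemiring k] [Ring R] [Star R] [Algebra k R] :
    R[X] → k[X] → Prop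
  | one : IsLinProd 1 1
  | X_sub_C_mul {h : R} {f : k[X]} {P : R[X]} {a : k[X]} (hh : HasNormPoly (X - C h) f)
      (hP : IsLinProd P a) : IsLinProd ((X - C h) * P) (f * a)

namespace IsLinProd

section Basic

variable {k R : Type*} [CommSemiring k] [Ring R] [StarRing R] [Algebra k R] {P : R[X]} {a : k[X]}

theorem hasNormPoly (hP : IsLinProd P a) : HasNormPoly P a := by
  induction hP with
  | one => exact .one
  | X_sub_C_mul hh _ ih => exact hh.mul ih

theorem monic (hP : IsLinProd P a) : P.Monic := by
  induction hP with
  | one => exact monic_one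
  | X_sub_C_mul _ _ ih => exact (monic_X_sub_C _).mul ih

theorem exists_swap {D : Type*} [DivisionRing D] [Algebra k D] (φ : R →ₐ[k] D) [IsLocalHom φ]
    (hcentral : ∀ x y : R, Commute (star x * x) y) {P : R[X]} {a f : k[X]}
    (hP : IsLinProd P a) {h : R} (hh : HasNormPoly (X - C h) f) (hfa : IsCoprime f a) :
    ∃ P' h', IsLinProd P' a ∧ HasNormPoly (X - C h') f ∧ (X - C h) * P = P' * (X - C h') := by
  induction hP generalizing h with
  | one => exact ⟨1, h, .one, hh, by rw [mul_one, one_mul]⟩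
  | @X_sub_C_mul y g P a hy _ ih =>
    have hunit : IsUnit (star y - h) := isUnit_sub_of_aeval_eq_zero φ
      hfa.of_mul_right_left.symm hy.aeval_star_eq_zero hh.aeval_eq_zero
    obtain ⟨h', y', hh', hy', hswap⟩ := hh.exists_swap_of_isUnit hy hunit (hcentral _)
    obtain ⟨P', h'', hP', hh'', hmove⟩ := ih hh' hfa.of_mul_right_right
    refine ⟨(X - C y') * P', h'', .X_sub_C_mul hy' hP', hh'', ?_⟩
    rw [← mul_assoc, hswap, mul_assoc, hmove, mul_assoc]

end Basic

section Factorization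

variable {k R D : Type*} [CommRing k] [IsDomain k] [Ring R] [StarRing R] [Algebra k R]
  [FaithfulSMul k R] [DivisionRing D] [Algebra k D] (φ : R →ₐ[k] D) [IsLocalHom φ]
  (hcentral : ∀ x y : R, Commute (star x * x) y)
  (hprim : ∀ (h : R) (f : k[X]), HasNormPoly (X - C h) f → IsPrimePow f)

include φ hcentral hprim

theorem exists_eq_mul {P : R[X]} {c a b : k[X]} (hP : IsLinProd P c) (ha : a.Monic)
    (hb : b.Monic) (hab : IsCoprime a b) (hc : c = a * b) :
    ∃ A B : R[X], IsLinProd A a ∧ IsLinProd B b ∧ P = A * B := by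
  induction hP generalizing a b with
  | one =>
    obtain rfl : a = 1 := ha.eq_one_of_isUnit (.of_mul_eq_one b hc.symm)
    obtain rfl : b = 1 := by rw [hc, one_mul]
    exact ⟨1, 1, .one, .one, (one_mul 1).symm⟩
  | @X_sub_C_mul h f P c hh _ ih =>
    have hf : f.Monic := hh.monic (monic_X_sub_C h)
    rcases dvd_or_dvd_of_isPrimePow_of_isCoprime (hprim h f hh) hab (hc ▸ dvd_mul_right f c) with
      ⟨a', rfl⟩ | ⟨b', rfl⟩
    · obtain ⟨A, B, hA, hB, rfl⟩ := ih (hf.of_mul_monic_left ha) hb hab.of_mul_left_right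
        (mul_left_cancel₀ hf.ne_zero (by rw [hc, mul_assoc]))
      exact ⟨(X - C h) * A, B, .X_sub_C_mul hh hA, hB, (mul_assoc _ _ _).symm⟩
    · obtain ⟨A, B, hA, hB, rfl⟩ := ih ha (hf.of_mul_monic_left hb) hab.of_mul_right_right
        (mul_left_cancel₀ hf.ne_zero (by rw [hc, mul_left_comm]))
      obtain ⟨A', h', hA', hh', hmove⟩ :=
        exists_swap φ hcentral hA hh hab.of_mul_right_left.symm
      refine ⟨A', (X - C h') * B, hA', .X_sub_C_mul hh' hB, ?_⟩
      rw [← mul_assoc, hmove, mul_assoc]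

theorem of_mul {A B : R[X]} {a b c : k[X]} (hAB : IsLinProd (A * B) c) (hA : HasNormPoly A a)
    (hB : HasNormPoly B b) (hA_monic : A.Monic) (hB_monic : B.Monic) (hab : IsCoprime a b) :
    IsLinProd A a ∧ IsLinProd B b := by
  obtain ⟨A', B', hA', hB', hmul⟩ := hAB.exists_eq_mul φ hcentral hprim (hA.monic hA_monic)
    (hB.monic hB_monic) hab (hAB.hasNormPoly.poly_unique (hA.mul hB))
  obtain ⟨rfl, rfl⟩ := hA.eq_and_eq_of_mul_eq_mul hB hA'.hasNormPoly hB'.hasNormPoly hab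
    hA_monic hA'.monic hmul
  exact ⟨hA', hB'⟩

theorem of_prod_ofFn {r : ℕ} {As : Fin r → R[X]} {as : Fin r → k[X]} {c : k[X]}
    (hprod : IsLinProd (List.ofFn As).prod c) (hmonic : ∀ i, (As i).Monic)
    (hnorm : ∀ i, HasNormPoly (As i) (as i)) (hcop : Pairwise fun i j => IsCoprime (as i) (as j)) :
    ∀ i, IsLinProd (As i) (as i) := by
  induction r generalizing c with
  | zero => exact fun i => i.elim0
  | succ r ih =>
    rw [List.ofFn_succ, List.prod_cons] at hprod
    have hcop_tail : IsCoprime (as 0) (∏ i : Fin r, as i.succ) :=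
      .prod_right fun i _ => hcop (Fin.succ_ne_zero i).symm
    obtain ⟨hhead, htail⟩ := hprod.of_mul φ hcentral hprim (hnorm 0)
      (.prod_ofFn fun i => hnorm i.succ) (hmonic 0) (monic_prod_ofFn fun i => hmonic i.succ)
      hcop_tail
    exact Fin.cases hhead <| ih htail (fun i => hmonic i.succ) (fun i => hnorm i.succ)
      fun i j hij => hcop (Fin.succ_injective r |>.ne hij)

end Factorization

end IsLinProd

section DualQuaternions

theorem fst_star (x : DHq) : (star x).fst = star x.fst := by
  change (inl (star x.fst) + inr (star x.snd) : DHq).fst = star x.fst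
  rw [fst_add, fst_inl, fst_inr, add_zero]

theorem snd_star (x : DHq) : (star x).snd = star x.snd := by
  change (inl (star x.fst) + inr (star x.snd) : DHq).snd = star x.snd
  rw [snd_add, snd_inl, snd_inr, zero_add]

noncomputable instance : StarRing DHq where
  star_involutive x := TrivSqZeroExt.ext (by simp only [fst_star, star_star])
    (by simp only [snd_star, star_star])
  star_mul x y := TrivSqZeroExt.ext (by simp only [fst_star, fst_mul, star_mul])
    (by simp [fst_star, snd_star, add_comm])
  star_add x y := TrivSqZeroExt.ext (by simp only [fst_star, fst_add, star_add])
    (by simp only [snd_star, snd_add, star_add])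

theorem commute_star_mul_self (x y : DHq) : Commute (star x * x) y := by
  refine TrivSqZeroExt.ext ?_ ?_ <;> ext <;> simp [fst_star, snd_star] <;> ring

instance isLocalHom_fstHom {S R M : Type*} [CommSemiring S] [Semiring R] [Algebra S R]
    [AddCommGroup M] [Module S M] [Module R M] [Module Rᵐᵒᵖ M] [SMulCommClass R Rᵐᵒᵖ M]
    [IsScalarTower S R M] [IsScalarTower S Rᵐᵒᵖ M] : IsLocalHom (fstHom S R M) :=
  ⟨fun _ hx => isUnit_iff_isUnit_fst.mpr hx⟩

theorem hasNormPoly_quaternion_X_sub_C {R : Type*} [CommRing R] (p : Quaternion R) :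
    HasNormPoly (X - C p) ((X - C p.re) ^ 2 + C (Quaternion.normSq p.im)) := by
  have hp : X - C p = (X - C p.re).map (algebraMap R (Quaternion R)) - C p.im := by
    conv_lhs => rw [← Quaternion.re_add_im p]
    rw [C_add, Polynomial.map_sub, map_X, map_C, Quaternion.algebraMap_def, sub_sub]
  have hstar : X - C (star p) = (X - C p.re).map (algebraMap R (Quaternion R)) + C p.im := by
    conv_lhs => rw [← Quaternion.re_add_im p]
    rw [star_add, Quaternion.star_coe, Quaternion.star_im, ← sub_eq_add_neg, C_sub,
      Polynomial.map_sub, map_X, map_C, Quaternion.algebraMap_def, sub_sub_eq_add_sub,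
      add_sub_right_comm]
  rw [HasNormPoly, cstar_X_sub_C, hstar, hp,
    ← Commute.mul_self_sub_mul_self_eq' (commute_map_algebraMap (X - C p.re) (C p.im)),
    ← sq, ← sq, ← C_pow, Quaternion.im_sq, C_neg, sub_neg_eq_add, Polynomial.map_add,
    Polynomial.map_pow, map_C, Quaternion.algebraMap_def]

theorem isPrimePow_X_sub_C_sq_add_C_of_nonneg {K : Type*} [Field K] [LinearOrder K]
    [IsStrictOrderedRing K] (c : K) {d : K} (hd : 0 ≤ d) :
    IsPrimePow ((X - C c) ^ 2 + C d) := by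
  rcases hd.eq_or_lt with rfl | hd
  · rw [C_0, add_zero]
    exact (prime_X_sub_C c).isPrimePow.pow two_ne_zero
  · refine Prime.isPrimePow (Irreducible.prime ?_)
    refine irreducible_of_degree_le_three_of_not_isRoot ?_ fun x hx => ?_
    · rw [natDegree_add_C, natDegree_pow, natDegree_X_sub_C]
      decide
    · rw [IsRoot.def, eval_add, eval_pow, eval_sub, eval_X, eval_C, eval_C] at hx
      nlinarith [sq_nonneg (x - c)]

theorem isPrimePow_of_hasNormPoly_X_sub_C (h : DHq) (f : ℝ[X])
    (hh : HasNormPoly (X - C h) f) : IsPrimePow f := by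
  have hfst : HasNormPoly (X - C h.fst) f := by
    simpa using hh.map (fstHom ℝ Hq Hq) fst_star
  rw [hfst.poly_unique (hasNormPoly_quaternion_X_sub_C h.fst)]
  exact isPrimePow_X_sub_C_sq_add_C_of_nonneg _ Quaternion.normSq_nonneg

theorem dPoly_eq_map (f : ℝ[X]) : dPoly f = f.map (algebraMap ℝ DHq) := by
  rw [dPoly, dhQ, qPoly, Polynomial.map_map]
  rfl

theorem hasNormPoly_iff_dPoly {A : DHq[X]} {a : ℝ[X]} :
    HasNormPoly A a ↔ A * cstar A = dPoly a := by
  rw [HasNormPoly, dPoly_eq_map]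

theorem hasLinFact_iff_exists_isLinProd {P : DHq[X]} :
    HasLinFact P ↔ ∃ a : ℝ[X], IsLinProd P a := by
  constructor
  · rintro ⟨L, hL, rfl⟩
    induction L with
    | nil => exact ⟨1, .one⟩
    | cons h L ih =>
      obtain ⟨⟨f, -, hf⟩, hL⟩ := List.forall_mem_cons.mp hL
      obtain ⟨a, ha⟩ := ih hL
      exact ⟨f * a, .X_sub_C_mul (hasNormPoly_iff_dPoly.mpr hf) ha⟩
  · rintro ⟨a, ha⟩
    induction ha with
    | one => exact ⟨[], by simp, rfl⟩
    | @X_sub_C_mul h f P a hh _ ih =>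
      obtain ⟨L, hL, rfl⟩ := ih
      have hmotion : IsMotion (X - C h) :=
        ⟨f, (hh.monic (monic_X_sub_C h)).ne_zero, hasNormPoly_iff_dPoly.mp hh⟩
      exact ⟨h :: L, List.forall_mem_cons.mpr ⟨hmotion, hL⟩, rfl⟩

end DualQuaternions

theorem primary_factors_admit_factorization_general {r : ℕ} (Ms : Fin r → DHq[X])
    (as : Fin r → ℝ[X]) (hmonic : ∀ i, (Ms i).Monic)
    (hnorm : ∀ i, Ms i * cstar (Ms i) = dPoly (as i))
    (hcop : Pairwise fun i j => IsCoprime (as i) (as j))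
    (hfact : HasLinFact (List.ofFn Ms).prod) : ∀ i, HasLinFact (Ms i) := by
  obtain ⟨c, hc⟩ := hasLinFact_iff_exists_isLinProd.mp hfact
  exact fun i => hasLinFact_iff_exists_isLinProd.mpr ⟨as i, hc.of_prod_ofFn (fstHom ℝ Hq Hq)
    commute_star_mul_self isPrimePow_of_hasNormPoly_X_sub_C hmonic
    (fun j => hasNormPoly_iff_dPoly.mpr (hnorm j)) hcop i⟩

/-- If `M` admits a linear factorization, then so does each factor of a primary-norm
decomposition of `M`. -/
theorem primary_factors_admit_factorization
    (M : DHq[X]) (hmonic : M.Monic) (hmotion : IsMotion M)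
    (hred : ReducedD M) (hbdd : BoundedD M)
    (r : ℕ) (Ms : Fin r → DHq[X]) (Ns : Fin r → ℝ[X]) (ns : Fin r → ℕ)
    (hprod : M = (List.ofFn Ms).prod)
    (hMs : ∀ i, (Ms i).Monic ∧ IsMotion (Ms i))
    (hNs : ∀ i, Irreducible (Ns i) ∧ (Ns i).natDegree = 2)
    (hcop : ∀ i j, i ≠ j → IsCoprime (Ns i) (Ns j))
    (hns : ∀ i, 0 < ns i)
    (hnorm : ∀ i, Ms i * cstar (Ms i) = dPoly (Ns i ^ ns i))
    (hfact : HasLinFact M) :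
    ∀ i, HasLinFact (Ms i) := by
  subst hprod
  exact primary_factors_admit_factorization_general Ms (fun i => Ns i ^ ns i)
    (fun i => (hMs i).1) hnorm (fun i j hij => (hcop i j hij).pow) hfact
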